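/- Let R be a *-regular ring. The set of projections of R, ordered by e ≤ f ⟺ f e = e, is a modular ortholattice with least element 0, greatest element 1, and orthocomplementation e ↦ 1 − e; in particular any two projections have a meet and a join among projections, the order is a partial order, e ↦ 1 − e is an order-reversing involution, and e ∧ (1−e) = 0, e ∨ (1−e) = 1. -/

import Mathlib

/-- An ortholattice: a bounded lattice with an order-reversing involution `x ↦ x′`
satisfying `x ⊓ x′ = ⊥` and `x ⊔ x′ = ⊤`. -/
class Ortholattice (α : Type*) extends Lattice α, BoundedOrder α where
  compl : α → α
  compl_antitone : ∀ x y : α, x ≤ y → compl y ≤ compl x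
  compl_compl : ∀ x : α, compl (compl x) = x
  inf_compl : ∀ x : α, x ⊓ compl x = ⊥
  sup_compl : ∀ x : α, x ⊔ compl x = ⊤

postfix:max "′" => Ortholattice.compl

/-- A `*`-regular ring: a unital `*`-ring in which `x * x* = 0` implies `x = 0` and which
is von Neumann regular. -/
class StarRegularRing (R : Type*) [Ring R] [StarRing R] : Prop where
  eq_zero_of_mul_star_self : ∀ x : R, x * star x = 0 → x = 0
  regular : ∀ a : R, ∃ x : R, a * x * a = a

/- The map `e ↦ R e` embeds the projections of `R` into the modular lattice of left ideals. In a
`*`-regular ring every principal left ideal is generated by a projection. Hence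
`R e + R f = R e + R f (1 - e)` is generated by `e + g`, where `g` is the projection with
`R g = R f (1 - e)`, which is orthogonal to `e`. Dually, `R e ∩ R f` is the left annihilator of
`{1 - e, 1 - f}`, so it is generated by `1 - h`, where `h` is the projection generating
`R (1 - e) + R (1 - f)`. The image is therefore a sublattice, and modularity is inherited. -/

theorem isModularLattice_of_injective {α β : Type*} [Lattice α] [Lattice β] [IsModularLattice β]
    (φ : LatticeHom α β) (hφ : Function.Injective φ) : IsModularLattice α where
  sup_inf_le_assoc_of_le {x} y {z} hxz := by
    refine (hφ ?_).le
    simpa only [map_sup, map_inf] using sup_inf_assoc_of_le (φ y) (OrderHomClass.mono φ hxz)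

theorem mul_eq_left_iff_mul_eq_right_of_isSelfAdjoint {S : Type*} [Mul S] [StarMul S] {e f : S}
    (he : IsSelfAdjoint e) (hf : IsSelfAdjoint f) : e * f = e ↔ f * e = e := by
  rw [← star_inj, star_mul, he.star_eq, hf.star_eq]

theorem isStarProjection_of_star_mul_self_eq {S : Type*} [Mul S] [StarMul S] {p : S}
    (hp : star p * p = p) : IsStarProjection p := by
  have hsa : IsSelfAdjoint p := hp ▸ IsSelfAdjoint.star_mul_self p
  refine ⟨?_, hsa⟩
  rwa [hsa.star_eq] at hp

section IdempotentIdeals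

theorem mem_span_singleton_iff_mul_eq_self {S : Type*} [Semiring S] {e x : S}
    (he : IsIdempotentElem e) : x ∈ Ideal.span {e} ↔ x * e = x := by
  rw [Ideal.mem_span_singleton']
  refine ⟨?_, fun hx => ⟨x, hx⟩⟩
  rintro ⟨y, rfl⟩
  rw [mul_assoc, he.eq]

theorem span_singleton_sup_span_singleton_of_orthogonal {S : Type*} [Semiring S] {e g : S}
    (he : IsIdempotentElem e) (hg : IsIdempotentElem g) (heg : e * g = 0) (hge : g * e = 0) :
    Ideal.span {e} ⊔ Ideal.span {g} = Ideal.span {e + g} := by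
  apply le_antisymm
  · simp only [sup_le_iff, Ideal.span_singleton_le_iff_mem, Ideal.mem_span_singleton']
    exact ⟨⟨e, by rw [mul_add, he.eq, heg, add_zero]⟩, ⟨g, by rw [mul_add, hg.eq, hge, zero_add]⟩⟩
  · rw [Ideal.span_singleton_le_iff_mem]
    exact Submodule.add_mem_sup (Ideal.mem_span_singleton_self e) (Ideal.mem_span_singleton_self g)

variable {S : Type*} [Ring S]

theorem mem_span_singleton_one_sub_iff_mul_eq_zero {e x : S} (he : IsIdempotentElem e) :
    x ∈ Ideal.span {1 - e} ↔ x * e = 0 := by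
  rw [mem_span_singleton_iff_mul_eq_self he.one_sub, mul_sub, mul_one, sub_eq_self]

theorem isCompl_span_singleton_one_sub {e : S} (he : IsIdempotentElem e) :
    IsCompl (Ideal.span {e}) (Ideal.span {1 - e}) := by
  constructor
  · rw [Submodule.disjoint_def]
    intro x hx hx'
    rw [← (mem_span_singleton_iff_mul_eq_self he).1 hx,
      (mem_span_singleton_one_sub_iff_mul_eq_zero he).1 hx']
  · rw [codisjoint_iff, Ideal.eq_top_iff_one]
    simpa only [add_sub_cancel] using Submodule.add_mem_sup
      (Ideal.mem_span_singleton_self e) (Ideal.mem_span_singleton_self (1 - e))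

theorem span_singleton_sup_span_singleton_mul_one_sub (e a : S) :
    Ideal.span {e} ⊔ Ideal.span {a * (1 - e)} = Ideal.span {e} ⊔ Ideal.span {a} := by
  have hae : a * e ∈ Ideal.span {e} := Ideal.mul_mem_left _ a (Ideal.mem_span_singleton_self e)
  apply le_antisymm
  · have hsub : a * (1 - e) ∈ Ideal.span {e} ⊔ Ideal.span {a} := by
      rw [mul_sub, mul_one]
      exact sub_mem (Submodule.mem_sup_right (Ideal.mem_span_singleton_self a))
        (Submodule.mem_sup_left hae)
    exact sup_le le_sup_left ((Ideal.span_singleton_le_iff_mem _).2 hsub)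
  · have hadd : a ∈ Ideal.span {e} ⊔ Ideal.span {a * (1 - e)} := by
      simpa only [← mul_add, add_sub_cancel, mul_one] using
        Submodule.add_mem_sup hae (Ideal.mem_span_singleton_self (a * (1 - e)))
    exact sup_le le_sup_left ((Ideal.span_singleton_le_iff_mem _).2 hadd)

end IdempotentIdeals

section Annihilators

variable {S : Type*} [Semiring S] [StarRing S]

theorem mul_eq_zero_iff_span_singleton_le_ker {h : S} (hh : IsSelfAdjoint h) (x : S) :
    x * h = 0 ↔ Ideal.span {h} ≤ LinearMap.ker (LinearMap.toSpanSingleton S S (star x)) := by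
  rw [Ideal.span_singleton_le_iff_mem, LinearMap.mem_ker, LinearMap.toSpanSingleton_apply,
    smul_eq_mul, ← star_eq_zero, star_mul, hh.star_eq]

theorem mul_eq_zero_iff_of_span_singleton_eq_sup {e f h : S} (he : IsSelfAdjoint e)
    (hf : IsSelfAdjoint f) (hh : IsSelfAdjoint h)
    (hspan : Ideal.span {h} = Ideal.span {e} ⊔ Ideal.span {f}) (x : S) :
    x * h = 0 ↔ x * e = 0 ∧ x * f = 0 := by
  simp only [mul_eq_zero_iff_span_singleton_le_ker, he, hf, hh, hspan, sup_le_iff]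

theorem span_singleton_one_sub_eq_inf {S : Type*} [Ring S] [StarRing S] {e f h : S}
    (he : IsStarProjection e) (hf : IsStarProjection f) (hh : IsStarProjection h)
    (hspan : Ideal.span {h} = Ideal.span {e} ⊔ Ideal.span {f}) :
    Ideal.span {1 - h} = Ideal.span {1 - e} ⊓ Ideal.span {1 - f} := by
  ext x
  simp only [Submodule.mem_inf, mem_span_singleton_one_sub_iff_mul_eq_zero, he.isIdempotentElem,
    hf.isIdempotentElem, hh.isIdempotentElem]
  exact mul_eq_zero_iff_of_span_singleton_eq_sup he.isSelfAdjoint hf.isSelfAdjoint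
    hh.isSelfAdjoint hspan x

end Annihilators

namespace StarRegularRing

variable {R : Type*} [Ring R] [StarRing R] [StarRegularRing R]

theorem mul_eq_zero_of_mul_mul_star_eq_zero {x a : R} (h : x * (a * star a) = 0) : x * a = 0 := by
  apply eq_zero_of_mul_star_self
  calc x * a * star (x * a) = x * (a * star a) * star x := by simp only [star_mul, mul_assoc]
    _ = 0 := by rw [h, zero_mul]

theorem exists_isStarProjection_span_singleton_eq (a : R) :
    ∃ p : R, IsStarProjection p ∧ Ideal.span {p} = Ideal.span {a} := by
  obtain ⟨x, hx⟩ := regular (a * star a)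
  have hap : a * (star a * x * a) = a := by
    have hzero : (a * star a * x - 1) * a = 0 :=
      mul_eq_zero_of_mul_mul_star_eq_zero (by rw [sub_mul, one_mul, hx, sub_self])
    simpa only [sub_mul, one_mul, sub_eq_zero, mul_assoc] using hzero
  refine ⟨star a * x * a, isStarProjection_of_star_mul_self_eq ?_, le_antisymm ?_ ?_⟩
  · calc star (star a * x * a) * (star a * x * a)
        = star (a * (star a * x * a)) * x * a := by
          rw [star_mul a]; simp only [mul_assoc]
      _ = star a * x * a := by rw [hap]
  · exact (Ideal.span_singleton_le_iff_mem _).2 (Ideal.mem_span_singleton'.2 ⟨star a * x, rfl⟩)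
  · exact (Ideal.span_singleton_le_iff_mem _).2 (Ideal.mem_span_singleton'.2 ⟨a, hap⟩)

theorem exists_isStarProjection_span_singleton_eq_sup {e : R} (he : IsStarProjection e) (a : R) :
    ∃ p : R, IsStarProjection p ∧ Ideal.span {p} = Ideal.span {e} ⊔ Ideal.span {a} := by
  obtain ⟨g, hg, hspan⟩ := exists_isStarProjection_span_singleton_eq (a * (1 - e))
  have hge : g * e = 0 := by
    rw [← mem_span_singleton_one_sub_iff_mul_eq_zero he.isIdempotentElem]
    have hmem : a * (1 - e) ∈ Ideal.span {1 - e} :=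
      Ideal.mul_mem_left _ a (Ideal.mem_span_singleton_self _)
    exact (Ideal.span_singleton_le_iff_mem _).1
      (hspan.trans_le ((Ideal.span_singleton_le_iff_mem _).2 hmem))
  have heg : e * g = 0 := by
    simpa only [star_mul, star_zero, he.isSelfAdjoint.star_eq, hg.isSelfAdjoint.star_eq]
      using congrArg star hge
  refine ⟨e + g, he.add hg heg, ?_⟩
  rw [← span_singleton_sup_span_singleton_mul_one_sub, ← hspan,
    span_singleton_sup_span_singleton_of_orthogonal he.isIdempotentElem hg.isIdempotentElem heg hge]

end StarRegularRing

/-- The type of projections (self-adjoint idempotents) of a `*`-ring, on which the ortholattice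
structure is built. It is a type synonym so that its order does not clash with the order a subtype
inherits when `R` is itself ordered. -/
def StarProjection (R : Type*) [Ring R] [StarRing R] : Type _ :=
  {e : R // e * e = e ∧ star e = e}

namespace StarProjection

variable {R : Type*} [Ring R] [StarRing R]

instance : CoeOut (StarProjection R) R := ⟨Subtype.val⟩

theorem isStarProjection (e : StarProjection R) : IsStarProjection (e : R) :=
  isStarProjection_iff'.2 e.2

/-- The principal left ideal `R e` generated by a projection `e`, through which the order and the
lattice operations of projections are compared with those of left ideals. -/
def leftIdeal (e : StarProjection R) : Ideal R := Ideal.span {(e : R)}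

instance : LE (StarProjection R) := ⟨fun e f => e.leftIdeal ≤ f.leftIdeal⟩

instance : LT (StarProjection R) := ⟨fun e f => e.leftIdeal < f.leftIdeal⟩

variable {e f : StarProjection R}

theorem le_iff_mul_eq_left : e ≤ f ↔ (e : R) * f = e :=
  (Ideal.span_singleton_le_iff_mem _).trans
    (mem_span_singleton_iff_mul_eq_self f.isStarProjection.isIdempotentElem)

theorem le_iff_mul_eq_right : e ≤ f ↔ (f : R) * e = e :=
  le_iff_mul_eq_left.trans (mul_eq_left_iff_mul_eq_right_of_isSelfAdjoint
    e.isStarProjection.isSelfAdjoint f.isStarProjection.isSelfAdjoint)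

theorem leftIdeal_injective : Function.Injective (leftIdeal (R := R)) := by
  intro e f h
  have hef : (e : R) * f = e := le_iff_mul_eq_left.1 h.le
  have hfe : (e : R) * f = f := le_iff_mul_eq_right.1 h.ge
  exact Subtype.ext (hef.symm.trans hfe)

instance : Bot (StarProjection R) := ⟨⟨0, isStarProjection_iff'.1 (.zero R)⟩⟩

instance : Top (StarProjection R) := ⟨⟨1, isStarProjection_iff'.1 (.one R)⟩⟩

instance : Compl (StarProjection R) :=
  ⟨fun e => ⟨1 - e, isStarProjection_iff'.1 e.isStarProjection.one_sub⟩⟩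

theorem leftIdeal_bot : leftIdeal (⊥ : StarProjection R) = ⊥ :=
  Ideal.span_singleton_zero

theorem leftIdeal_top : leftIdeal (⊤ : StarProjection R) = ⊤ :=
  Ideal.span_singleton_one

theorem compl_compl (e : StarProjection R) : eᶜᶜ = e :=
  Subtype.ext (sub_sub_cancel 1 (e : R))

theorem compl_le_compl (h : e ≤ f) : fᶜ ≤ eᶜ := by
  have hef : (e : R) * f = e := le_iff_mul_eq_left.1 h
  rw [le_iff_mul_eq_right]
  calc (1 - e : R) * (1 - f) = 1 - f - (e - e * f) := by noncomm_ring
    _ = 1 - f := by rw [hef, sub_self, sub_zero]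

theorem isCompl_leftIdeal_compl (e : StarProjection R) : IsCompl e.leftIdeal eᶜ.leftIdeal :=
  isCompl_span_singleton_one_sub e.isStarProjection.isIdempotentElem

variable [StarRegularRing R]

theorem exists_leftIdeal_eq_sup (e f : StarProjection R) :
    ∃ p : StarProjection R, p.leftIdeal = e.leftIdeal ⊔ f.leftIdeal := by
  obtain ⟨p, hp, hspan⟩ :=
    StarRegularRing.exists_isStarProjection_span_singleton_eq_sup e.isStarProjection (f : R)
  exact ⟨⟨p, isStarProjection_iff'.1 hp⟩, hspan⟩

noncomputable instance : Max (StarProjection R) := ⟨fun e f => (exists_leftIdeal_eq_sup e f).choose⟩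

noncomputable instance : Min (StarProjection R) := ⟨fun e f => (eᶜ ⊔ fᶜ)ᶜ⟩

theorem leftIdeal_sup (e f : StarProjection R) :
    (e ⊔ f).leftIdeal = e.leftIdeal ⊔ f.leftIdeal :=
  (exists_leftIdeal_eq_sup e f).choose_spec

theorem leftIdeal_inf (e f : StarProjection R) :
    (e ⊓ f).leftIdeal = e.leftIdeal ⊓ f.leftIdeal := by
  have h : (eᶜ ⊔ fᶜ)ᶜ.leftIdeal = eᶜᶜ.leftIdeal ⊓ fᶜᶜ.leftIdeal :=
    span_singleton_one_sub_eq_inf eᶜ.isStarProjection fᶜ.isStarProjection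
      (eᶜ ⊔ fᶜ).isStarProjection (leftIdeal_sup eᶜ fᶜ)
  rwa [compl_compl, compl_compl] at h

noncomputable instance : Lattice (StarProjection R) :=
  leftIdeal_injective.lattice leftIdeal Iff.rfl Iff.rfl leftIdeal_sup leftIdeal_inf

noncomputable instance ortholattice : Ortholattice (StarProjection R) where
  bot_le e := (leftIdeal_bot.trans_le bot_le : leftIdeal ⊥ ≤ e.leftIdeal)
  le_top e := (le_top.trans_eq leftIdeal_top.symm : e.leftIdeal ≤ leftIdeal ⊤)
  compl := Compl.compl
  compl_antitone _ _ := compl_le_compl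
  compl_compl := compl_compl
  inf_compl e := leftIdeal_injective <| by
    rw [leftIdeal_inf, e.isCompl_leftIdeal_compl.inf_eq_bot, leftIdeal_bot]
  sup_compl e := leftIdeal_injective <| by
    rw [leftIdeal_sup, e.isCompl_leftIdeal_compl.sup_eq_top, leftIdeal_top]

/-- The lattice embedding `e ↦ R e` of projections into left ideals, along which modularity is
pulled back. -/
def leftIdealHom : LatticeHom (StarProjection R) (Ideal R) where
  toFun := leftIdeal
  map_sup' := leftIdeal_sup
  map_inf' := leftIdeal_inf

instance isModularLattice : IsModularLattice (StarProjection R) :=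
  isModularLattice_of_injective leftIdealHom leftIdeal_injective

end StarProjection

/-- The projections of a `*`-regular ring, ordered by `e ≤ f ↔ f * e = e`, form a modular
ortholattice with least element `0`, greatest element `1` and orthocomplementation
`e ↦ 1 - e`. -/
theorem stmt17 (R : Type*) [Ring R] [StarRing R] [StarRegularRing R] :
    ∃ inst : Ortholattice {e : R // e * e = e ∧ star e = e},
      letI := inst
      (∀ e f : {e : R // e * e = e ∧ star e = e}, e ≤ f ↔ (f : R) * (e : R) = (e : R)) ∧
      IsModularLattice {e : R // e * e = e ∧ star e = e} ∧
      ((⊥ : {e : R // e * e = e ∧ star e = e}) : R) = 0 ∧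
      ((⊤ : {e : R // e * e = e ∧ star e = e}) : R) = 1 ∧
      (∀ e : {e : R // e * e = e ∧ star e = e}, ((e′ : {e : R // e * e = e ∧ star e = e}) : R) = 1 - (e : R)) := by
  refine ⟨StarProjection.ortholattice (R := R), ?_⟩
  exact ⟨fun _ _ => StarProjection.le_iff_mul_eq_right, StarProjection.isModularLattice, rfl, rfl,
    fun _ => rfl⟩
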